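/- Let E be a real inner product space, x ∈ E, and L : E → ℝ a function differentiable at x with gradient g (i.e., L(x + δ) = L(x) + ⟪g, δ⟫ + o(‖δ‖) as δ → 0). Define V(ε) = sup_{‖δ‖ ≤ ε} (L(x + δ) − L(x)) for ε > 0, and assume L is bounded on some ball around x so that V(ε) is finite for small ε. Then V(ε)/ε tends to ‖g‖ as ε tends to 0 from the right. -/

import Mathlib

open Filter Asymptotics
open scoped RealInnerProductSpace Topology

/-- First-order Taylor expansion of the pointwise adversarial vulnerability
(Simon-Gabriel et al.): if `L` is differentiable at `x` with gradient `g` and is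
bounded on some ball around `x`, then the maximal loss increase over an ε-ball,
divided by ε, tends to `‖g‖` as `ε → 0⁺`. -/
theorem adversarial_vulnerability_first_order
    {E : Type*} [NormedAddCommGroup E] [InnerProductSpace ℝ E]
    (x : E) (L : E → ℝ) (g : E)
    (hdiff : (fun δ : E => L (x + δ) - L x - ⟪g, δ⟫) =o[𝓝 (0 : E)] fun δ => ‖δ‖)
    (hbdd : ∃ ρ > (0 : ℝ), ∃ C : ℝ, ∀ δ : E, ‖δ‖ ≤ ρ → |L (x + δ)| ≤ C)
    (V : ℝ → ℝ)
    (hV : ∀ ε > (0 : ℝ),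
      V ε = sSup ((fun δ : E => L (x + δ) - L x) '' {δ : E | ‖δ‖ ≤ ε})) :
    Tendsto (fun ε => V ε / ε) (𝓝[>] (0 : ℝ)) (𝓝 ‖g‖) := by
  rw [Metric.tendsto_nhds]
  intro c hc
  have h1 := hdiff.def (half_pos hc)
  obtain ⟨r, hr, h2⟩ := Metric.eventually_nhds_iff.1 h1
  have hR : ∀ δ : E, ‖δ‖ < r → |L (x + δ) - L x - ⟪g, δ⟫| ≤ c / 2 * ‖δ‖ := by
    intro δ hδ
    have := h2 (y := δ) (by simpa using hδ)
    simpa using this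
  filter_upwards [Ioo_mem_nhdsGT hr] with ε hε
  obtain ⟨h0, hεr⟩ := hε
  have hub : ∀ y ∈ (fun δ : E => L (x + δ) - L x) '' {δ : E | ‖δ‖ ≤ ε},
      y ≤ (‖g‖ + c / 2) * ε := by
    rintro _ ⟨δ, hδ, rfl⟩
    have hδ' : ‖δ‖ ≤ ε := hδ
    have a := (abs_le.1 (hR δ (lt_of_le_of_lt hδ' hεr))).2
    have b := real_inner_le_norm g δ
    have d : (‖g‖ + c / 2) * ‖δ‖ ≤ (‖g‖ + c / 2) * ε := by gcongr
    show L (x + δ) - L x ≤ _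
    linarith
  have hup : V ε ≤ (‖g‖ + c / 2) * ε := by
    rw [hV ε h0]
    exact csSup_le ⟨_, 0, by simpa using h0.le, rfl⟩ hub
  have hlo : (‖g‖ - c / 2) * ε ≤ V ε := by
    have hn : ‖(ε / ‖g‖) • g‖ ≤ ε := by
      rw [norm_smul, Real.norm_of_nonneg (by positivity)]
      by_cases hg : ‖g‖ = 0
      · simp [hg, h0.le]
      · exact (div_mul_cancel₀ ε hg).le
    have hi : ⟪g, (ε / ‖g‖) • g⟫ = ε * ‖g‖ := by
      rw [real_inner_smul_right, real_inner_self_eq_norm_sq]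
      by_cases hg : ‖g‖ = 0
      · simp [hg]
      · field_simp
    have a := (abs_le.1 (hR _ (lt_of_le_of_lt hn hεr))).1
    rw [hi] at a
    have d : c / 2 * ‖(ε / ‖g‖) • g‖ ≤ c / 2 * ε := by gcongr
    have e : L (x + (ε / ‖g‖) • g) - L x ≤ V ε := by
      rw [hV ε h0]
      exact le_csSup ⟨_, hub⟩ ⟨_, hn, rfl⟩
    linarith
  rw [Real.dist_eq]
  have u1 : V ε / ε ≤ ‖g‖ + c / 2 := (div_le_iff₀ h0).2 hup
  have u2 : ‖g‖ - c / 2 ≤ V ε / ε := (le_div_iff₀ h0).2 hlo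
  rw [abs_lt]
  constructor <;> linarith
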